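/- arXiv:1102.5185 — 2 statements merged into one kernel-verified Lean document; each statement's English description precedes it below -/
import Mathlib

section
/- Let M be a monoid, let N ≥ 2, and let c : Fin N → M be a family of elements such that for all indices i ≠ j and all x, y, z ∈ M one has x * (c i) * y ≠ x * (c j) * z. Then the monoid homomorphism from the free monoid on Fin N to M that sends the i-th generator to c i is injective. Consequently, its range is a submonoid of M isomorphic, as a monoid, to the free monoid on N generators, and this submonoid contains the image of every word over the N-letter alphabet. -/
/-!
The monoid `M` need not be left cancellative, so words cannot be compared by cancelling a common
first letter. Instead `eq_of_mul_prod_eq` proves that `p * c(u) = p * c(v)` forces `u = v` for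
every left factor `p : M`, by induction on `u`: a common first letter is absorbed into `p`,
different first letters contradict the hypothesis directly, and if one word is empty while the
other starts with `j`, multiplying `p = p * c j * w` on the right by `c i` for some `i ≠ j`
(this is where two letters are needed) contradicts the hypothesis as well.
-/

/-- No left factor `p` can absorb a nonempty product of letters. -/
theorem ne_mul_letter_mul {M α : Type*} [Monoid M] [Nontrivial α] (c : α → M)
    (hc : ∀ i j : α, i ≠ j → ∀ x y z : M, x * c i * y ≠ x * c j * z)
    (p : M) (j : α) (w : M) : p ≠ p * (c j * w) := by
  intro h
  obtain ⟨i, hij⟩ := exists_ne j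
  refine hc i j hij p 1 (w * c i) ?_
  calc p * c i * 1 = p * c i := mul_one _
    _ = p * (c j * w) * c i := by rw [← h]
    _ = p * c j * (w * c i) := by simp only [mul_assoc]

/-- Injectivity of word evaluation in the presence of an arbitrary left factor, which replaces
left cancellation in the induction. -/
theorem eq_of_mul_prod_eq {M α : Type*} [Monoid M] [Nontrivial α] (c : α → M)
    (hc : ∀ i j : α, i ≠ j → ∀ x y z : M, x * c i * y ≠ x * c j * z)
    (u v : List α) (p : M) (h : p * (u.map c).prod = p * (v.map c).prod) : u = v := by
  induction u generalizing v p with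
  | nil =>
    cases v with
    | nil => rfl
    | cons j v =>
      simp only [List.map_nil, List.prod_nil, mul_one, List.map_cons, List.prod_cons] at h
      exact absurd h (ne_mul_letter_mul c hc p j _)
  | cons i u ih =>
    cases v with
    | nil =>
      simp only [List.map_nil, List.prod_nil, mul_one, List.map_cons, List.prod_cons] at h
      exact absurd h.symm (ne_mul_letter_mul c hc p i _)
    | cons j v =>
      simp only [List.map_cons, List.prod_cons, ← mul_assoc] at h
      obtain rfl : i = j := by
        by_contra hij
        exact hc i j hij p _ _ h
      rw [ih v (p * c i) h]

/-- Lemma 5.2: if `M` is a monoid, `N ≥ 2`, and `c : Fin N → M`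
satisfies `x * c i * y ≠ x * c j * z` for all `i ≠ j` and all `x y z`, then the
monoid homomorphism `FreeMonoid.lift c` (sending the `i`-th generator to `c i`)
is injective; consequently its range is a submonoid of `M` isomorphic to the
free monoid on `N` generators, containing the image of every word. -/
theorem lift_injective_of_distinctness {M : Type*} [Monoid M] (N : ℕ) (hN : 2 ≤ N)
    (c : Fin N → M)
    (hc : ∀ i j : Fin N, i ≠ j → ∀ x y z : M, x * c i * y ≠ x * c j * z) :
    Function.Injective (FreeMonoid.lift c) ∧
    Nonempty (FreeMonoid (Fin N) ≃* MonoidHom.mrange (FreeMonoid.lift c)) ∧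
    ∀ w : FreeMonoid (Fin N), FreeMonoid.lift c w ∈ MonoidHom.mrange (FreeMonoid.lift c) := by
  have : Nontrivial (Fin N) := Fin.nontrivial_iff_two_le.mpr hN
  have hinj : Function.Injective (FreeMonoid.lift c) := by
    intro u v h
    rw [FreeMonoid.lift_apply, FreeMonoid.lift_apply] at h
    exact FreeMonoid.toList.injective (eq_of_mul_prod_eq c hc _ _ 1 (by rw [h]))
  refine ⟨hinj, ⟨MulEquiv.ofBijective (FreeMonoid.lift c).mrangeRestrict ⟨?_, ?_⟩⟩,
    fun w => ⟨w, rfl⟩⟩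
  · exact fun u v h => hinj (congrArg Subtype.val h)
  · exact MonoidHom.mrangeRestrict_surjective _
end

section
/- Let 𝒜 be a type and W = 𝒜* the free monoid of words over 𝒜. Let T_α, T_β be sets with ternary relations E_α, E_β, and let E be a ternary relation on T_α × T_β satisfying the compatibility law: E_α A B C implies E (A,D) (B,D) (C,D) for every D ∈ T_β. Then for all languages 𝓚, 𝓛 ⊆ W × T_α and 𝓜 ⊆ W × T_β: (𝓚 ⊔ 𝓛) ⊙ 𝓜 = (𝓚 ⊙ 𝓜) ⊔ (𝓛 ⊙ 𝓜), where ⊔ is the logical join (logical closure of the union, with respect to the appropriate relation) and ⊙ is the logical concatenation (logical closure, with respect to E, of the concatenation language). -/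
/-!
For a fixed pair `(v, B) ∈ 𝓜` and an `E`-closed language `S`, the compatibility law makes
`{(u, A) : (uv, (A, B)) ∈ S}` an `Eα`-closed language. Hence an `E`-closed `S` that contains
`𝓝·𝓜` already contains `(closure of 𝓝)·𝓜` (`catLang_lclosureLang_subset`). Taking `𝓝 = 𝓚 ∪ 𝓛`
and `S` the right-hand side gives one inclusion; the other is monotonicity of concatenation
and closure.
-/

/-- A language `𝓛 ⊆ W × T` is logically closed w.r.t. `E` (Definition 3.4). -/
def LClosedLang {W T : Type*} (E : T → T → T → Prop) (L : Set (W × T)) : Prop :=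
  ∀ (w : W) (A B C : T), (w, B) ∈ L → (w, C) ∈ L → E A B C → (w, A) ∈ L

/-- Logical closure of a language. -/
def lclosureLang {W T : Type*} (E : T → T → T → Prop) (L : Set (W × T)) :
    Set (W × T) :=
  ⋂₀ {S : Set (W × T) | L ⊆ S ∧ LClosedLang E S}

/-- Language concatenation over the free monoid of words (Definition 3.2):
`𝓛·𝓚 = {(uv, (A, B)) : (u, A) ∈ 𝓛, (v, B) ∈ 𝓚}`. -/
def catLang {𝒜 Tα Tβ : Type*} (L : Set (FreeMonoid 𝒜 × Tα))
    (K : Set (FreeMonoid 𝒜 × Tβ)) : Set (FreeMonoid 𝒜 × (Tα × Tβ)) :=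
  {p | ∃ u v A B, (u, A) ∈ L ∧ (v, B) ∈ K ∧ p = (u * v, (A, B))}

theorem subset_lclosureLang {W T : Type*} (E : T → T → T → Prop) (L : Set (W × T)) :
    L ⊆ lclosureLang E L :=
  fun _ hx _ hS => hS.1 hx

theorem lClosedLang_lclosureLang {W T : Type*} (E : T → T → T → Prop) (L : Set (W × T)) :
    LClosedLang E (lclosureLang E L) :=
  fun w A B C hB hC h S hS => hS.2 w A B C (hB S hS) (hC S hS) h

theorem lclosureLang_subset {W T : Type*} {E : T → T → T → Prop} {L S : Set (W × T)}
    (h : L ⊆ S) (hS : LClosedLang E S) : lclosureLang E L ⊆ S :=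
  fun _ hx => hx S ⟨h, hS⟩

theorem catLang_mono_left {𝒜 Tα Tβ : Type*} {K L : Set (FreeMonoid 𝒜 × Tα)}
    (h : K ⊆ L) (M : Set (FreeMonoid 𝒜 × Tβ)) : catLang K M ⊆ catLang L M := by
  rintro _ ⟨u, v, A, B, hA, hB, rfl⟩
  exact ⟨u, v, A, B, h hA, hB, rfl⟩

/-- Passing to the logical closure in the left factor does not leave any `E`-closed language
containing the concatenation, because the fibres `{(u, A) : (uv, (A, B)) ∈ S}` are
`Eα`-closed. -/
theorem catLang_lclosureLang_subset {𝒜 Tα Tβ : Type*}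
    {Eα : Tα → Tα → Tα → Prop} {E : Tα × Tβ → Tα × Tβ → Tα × Tβ → Prop}
    (hE : ∀ (A B C : Tα) (D : Tβ), Eα A B C → E (A, D) (B, D) (C, D))
    {N : Set (FreeMonoid 𝒜 × Tα)} {M : Set (FreeMonoid 𝒜 × Tβ)}
    {S : Set (FreeMonoid 𝒜 × (Tα × Tβ))} (h : catLang N M ⊆ S) (hS : LClosedLang E S) :
    catLang (lclosureLang Eα N) M ⊆ S := by
  rintro _ ⟨u, v, A, D, hA, hD, rfl⟩
  exact hA {p | (p.1 * v, (p.2, D)) ∈ S}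
    ⟨fun p hp => h ⟨p.1, v, p.2, D, hp, hD, rfl⟩,
      fun w A B C hB hC hABC => hS (w * v) (A, D) (B, D) (C, D) hB hC (hE A B C D hABC)⟩

/-- first identity of Lemma 3.1: if `E` is compatible with `E_α`
in the first coordinate, then `(𝓚 ⊔ 𝓛) ⊙ 𝓜 = (𝓚 ⊙ 𝓜) ⊔ (𝓛 ⊙ 𝓜)`, where `⊔`
is the logical join and `⊙` the logical concatenation. -/
theorem join_ocat_distrib {𝒜 Tα Tβ : Type*}
    (Eα : Tα → Tα → Tα → Prop) (Eβ : Tβ → Tβ → Tβ → Prop)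
    (E : Tα × Tβ → Tα × Tβ → Tα × Tβ → Prop)
    (hE : ∀ (A B C : Tα) (D : Tβ), Eα A B C → E (A, D) (B, D) (C, D))
    (K L : Set (FreeMonoid 𝒜 × Tα)) (M : Set (FreeMonoid 𝒜 × Tβ)) :
    lclosureLang E (catLang (lclosureLang Eα (K ∪ L)) M) =
      lclosureLang E (lclosureLang E (catLang K M) ∪ lclosureLang E (catLang L M)) := by
  apply Set.Subset.antisymm
  · refine lclosureLang_subset (catLang_lclosureLang_subset hE ?_ (lClosedLang_lclosureLang _ _))
      (lClosedLang_lclosureLang _ _)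
    rintro _ ⟨u, v, A, B, hA | hA, hB, rfl⟩
    · exact subset_lclosureLang _ _
        (Or.inl (subset_lclosureLang _ _ ⟨u, v, A, B, hA, hB, rfl⟩))
    · exact subset_lclosureLang _ _
        (Or.inr (subset_lclosureLang _ _ ⟨u, v, A, B, hA, hB, rfl⟩))
  · have key : ∀ N ⊆ K ∪ L, lclosureLang E (catLang N M) ⊆
        lclosureLang E (catLang (lclosureLang Eα (K ∪ L)) M) := fun N hN =>
      lclosureLang_subset
        ((catLang_mono_left (hN.trans (subset_lclosureLang _ _)) M).trans
          (subset_lclosureLang _ _))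
        (lClosedLang_lclosureLang _ _)
    exact lclosureLang_subset
      (Set.union_subset (key K Set.subset_union_left) (key L Set.subset_union_right))
      (lClosedLang_lclosureLang _ _)
end
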